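/- arXiv:2205.08624 — 3 statements merged into one kernel-verified Lean document; each statement's English description precedes it below -/
import Mathlib

section
/- Let ζ ∈ ℂ be a primitive 6th root of unity, and let g₁, g₂, g₃ be the ℂ-algebra automorphisms of the polynomial ring ℂ[x₁,y₁,x₂,y₂] determined by g₁ : (x₁,y₁,x₂,y₂) ↦ (ζx₁, ζ⁻¹y₁, x₂, y₂), g₂ : (x₁,y₁,x₂,y₂) ↦ (x₁, y₁, ζx₂, ζ⁻¹y₂), g₃ : (x₁,y₁,x₂,y₂) ↦ (x₂, y₂, x₁, y₁). Set Q₊ = x₁y₁ + x₂y₂ and Q₋ = x₁y₁ − x₂y₂. Then the ℂ-subspace of homogeneous degree-6 polynomials fixed by g₁, g₂ and g₃ is exactly the set of polynomials of the form α(x₁⁶ + x₂⁶) + β(y₁⁶ + y₂⁶) + A·Q₊³ + B·Q₊Q₋² with α, β, A, B ∈ ℂ; equivalently, it is the span of {x₁⁶ + x₂⁶, y₁⁶ + y₂⁶, Q₊³, Q₊Q₋²} and has dimension 4. -/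
open MvPolynomial

/-- `Q₊ = x₁y₁ + x₂y₂` in `ℂ[x₁,y₁,x₂,y₂]` with variables `x₁ = X 0, y₁ = X 1, x₂ = X 2, y₂ = X 3`. -/
noncomputable def Qplus : MvPolynomial (Fin 4) ℂ := X 0 * X 1 + X 2 * X 3

/-- `Q₋ = x₁y₁ − x₂y₂`. -/
noncomputable def Qminus : MvPolynomial (Fin 4) ℂ := X 0 * X 1 - X 2 * X 3

/-- `g₁ : (x₁,y₁,x₂,y₂) ↦ (ζx₁, ζ⁻¹y₁, x₂, y₂)`. -/
noncomputable def sexticG1 (ζ : ℂ) : MvPolynomial (Fin 4) ℂ →ₐ[ℂ] MvPolynomial (Fin 4) ℂ :=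
  aeval ![C ζ * X 0, C ζ⁻¹ * X 1, X 2, X 3]

/-- `g₂ : (x₁,y₁,x₂,y₂) ↦ (x₁, y₁, ζx₂, ζ⁻¹y₂)`. -/
noncomputable def sexticG2 (ζ : ℂ) : MvPolynomial (Fin 4) ℂ →ₐ[ℂ] MvPolynomial (Fin 4) ℂ :=
  aeval ![X 0, X 1, C ζ * X 2, C ζ⁻¹ * X 3]

/-- `g₃ : (x₁,y₁,x₂,y₂) ↦ (x₂, y₂, x₁, y₁)`. -/
noncomputable def sexticG3 : MvPolynomial (Fin 4) ℂ →ₐ[ℂ] MvPolynomial (Fin 4) ℂ :=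
  aeval ![X 2, X 3, X 0, X 1]

lemma aux_coeff_scale (c : Fin 4 → ℂ) (P : MvPolynomial (Fin 4) ℂ) (m : Fin 4 →₀ ℕ) :
    coeff m (aeval (fun i => C (c i) * X i : Fin 4 → MvPolynomial (Fin 4) ℂ) P) =
      (∏ i, c i ^ m i) * coeff m P := by
  induction P using MvPolynomial.induction_on' with
  | monomial u a =>
    have h : aeval (fun i => C (c i) * X i : Fin 4 → MvPolynomial (Fin 4) ℂ) (monomial u a) =
        C (∏ i, c i ^ u i) * monomial u a := by
      rw [aeval_monomial, monomial_eq, Finsupp.prod_fintype _ _ (by simp),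
        Finsupp.prod_fintype _ _ (by simp)]
      simp only [mul_pow, Finset.prod_mul_distrib, map_prod, map_pow, algebraMap_eq]
      ring
    rw [h, coeff_C_mul, coeff_monomial]
    split_ifs with hu
    · rw [hu]
    · simp
  | add p q hp hq => simp only [map_add, coeff_add, hp, hq, mul_add]

lemma aux_G1 (ζ : ℂ) (hζ : ζ ≠ 0) (P : MvPolynomial (Fin 4) ℂ) (m : Fin 4 →₀ ℕ) :
    coeff m (sexticG1 ζ P) = ζ ^ ((m 0 : ℤ) - m 1) * coeff m P := by
  have h := aux_coeff_scale ![ζ, ζ⁻¹, 1, 1] P m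
  have e : (fun i => C ((![ζ, ζ⁻¹, 1, 1] : Fin 4 → ℂ) i) * X i : Fin 4 → MvPolynomial (Fin 4) ℂ)
      = ![C ζ * X 0, C ζ⁻¹ * X 1, X 2, X 3] := by
    funext i; fin_cases i <;> simp
  rw [e] at h
  rw [sexticG1, h, zpow_sub₀ hζ]
  simp [Fin.prod_univ_four, div_eq_mul_inv]

lemma aux_G2 (ζ : ℂ) (hζ : ζ ≠ 0) (P : MvPolynomial (Fin 4) ℂ) (m : Fin 4 →₀ ℕ) :
    coeff m (sexticG2 ζ P) = ζ ^ ((m 2 : ℤ) - m 3) * coeff m P := by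
  have h := aux_coeff_scale ![1, 1, ζ, ζ⁻¹] P m
  have e : (fun i => C ((![1, 1, ζ, ζ⁻¹] : Fin 4 → ℂ) i) * X i : Fin 4 → MvPolynomial (Fin 4) ℂ)
      = ![X 0, X 1, C ζ * X 2, C ζ⁻¹ * X 3] := by
    funext i; fin_cases i <;> simp
  rw [e] at h
  rw [sexticG2, h, zpow_sub₀ hζ]
  simp [Fin.prod_univ_four, div_eq_mul_inv]

/-- exponent vectors -/
noncomputable def auxE (v : Fin 4 → ℕ) : Fin 4 →₀ ℕ := Finsupp.equivFunOnFinite.symm v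

lemma auxE_apply (v : Fin 4 → ℕ) (i : Fin 4) : auxE v i = v i := rfl

lemma aux_monomial (v : Fin 4 → ℕ) (a : ℂ) :
    monomial (auxE v) a = C a * (X 0 ^ v 0 * X 1 ^ v 1 * X 2 ^ v 2 * X 3 ^ v 3) := by
  rw [monomial_eq, Finsupp.prod_fintype _ _ (by simp), Fin.prod_univ_four]
  rfl

lemma aux_G3 (P : MvPolynomial (Fin 4) ℂ) (a b c d : ℕ) :
    coeff (auxE ![c, d, a, b]) (sexticG3 P) = coeff (auxE ![a, b, c, d]) P := by
  have e : (![X 2, X 3, X 0, X 1] : Fin 4 → MvPolynomial (Fin 4) ℂ) =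
      X ∘ (![2, 3, 0, 1] : Fin 4 → Fin 4) := by
    funext i; fin_cases i <;> rfl
  have hinj : Function.Injective (![2, 3, 0, 1] : Fin 4 → Fin 4) := by decide
  have h : sexticG3 P = rename (![2, 3, 0, 1] : Fin 4 → Fin 4) P := by
    rw [sexticG3, e]
    exact DFunLike.congr_fun (algHom_ext (fun i => by simp)) P
  have hm : auxE ![c, d, a, b] =
      Finsupp.mapDomain (![2, 3, 0, 1] : Fin 4 → Fin 4) (auxE ![a, b, c, d]) := by
    ext i
    have h0 := Finsupp.mapDomain_apply hinj (auxE ![a, b, c, d])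
    fin_cases i
    · exact (h0 2).symm
    · exact (h0 3).symm
    · exact (h0 0).symm
    · exact (h0 1).symm
  rw [h, hm, coeff_rename_mapDomain _ hinj]

/-- the eight invariant monomials -/
def auxT : Finset (Fin 4 → ℕ) :=
  {![6,0,0,0], ![0,6,0,0], ![0,0,6,0], ![0,0,0,6],
    ![3,3,0,0], ![2,2,1,1], ![1,1,2,2], ![0,0,3,3]}

lemma aux_mem_T (m : Fin 4 → ℕ) (h : m 0 + m 1 + m 2 + m 3 = 6)
    (h1 : (6 : ℤ) ∣ (m 0 : ℤ) - m 1) (h2 : (6 : ℤ) ∣ (m 2 : ℤ) - m 3) : m ∈ auxT := by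
  have e : m = ![m 0, m 1, m 2, m 3] := by funext i; fin_cases i <;> rfl
  rw [e]
  generalize m 0 = a at *
  generalize m 1 = b at *
  generalize m 2 = c at *
  generalize m 3 = d at *
  have ha : a ≤ 6 := by omega
  have hc : c ≤ 6 := by omega
  have hb : b ≤ 6 := by omega
  obtain rfl : d = 6 - a - b - c := by omega
  interval_cases a <;> interval_cases b <;> first | omega | skip
  all_goals interval_cases c <;> first | omega | decide

lemma aux_expand (P : MvPolynomial (Fin 4) ℂ)
    (h : ∀ m : Fin 4 →₀ ℕ, coeff m P ≠ 0 → (m : Fin 4 → ℕ) ∈ auxT) :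
    P = ∑ v ∈ auxT, monomial (auxE v) (coeff (auxE v) P) := by
  ext m
  rw [coeff_sum]
  simp only [coeff_monomial]
  by_cases hm : (m : Fin 4 → ℕ) ∈ auxT
  · rw [Finset.sum_eq_single_of_mem _ hm]
    · have : auxE m = m := by ext; rfl
      simp [this]
    · intro b _ hb
      rw [if_neg]
      rintro rfl
      exact hb rfl
  · rw [Finset.sum_eq_zero]
    · by_contra h'
      exact hm (h m h')
    · intro b hb
      rw [if_neg]
      rintro rfl
      exact hm hb

lemma aux_forward (ζ : ℂ) (hζ : IsPrimitiveRoot ζ 6) (P : MvPolynomial (Fin 4) ℂ)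
    (hP : P.IsHomogeneous 6) (h1 : sexticG1 ζ P = P) (h2 : sexticG2 ζ P = P)
    (h3 : sexticG3 P = P) : ∃ α β A B : ℂ,
        P = C α * (X 0 ^ 6 + X 2 ^ 6) + C β * (X 1 ^ 6 + X 3 ^ 6) +
            C A * Qplus ^ 3 + C B * Qplus * Qminus ^ 2 := by
  have h0 : ζ ≠ 0 := hζ.ne_zero (by norm_num)
  have hs := aux_expand P (by
    intro m hm
    apply aux_mem_T
    · have := hP hm
      rw [Finsupp.weight_apply, Finsupp.sum_fintype _ _ (by simp), Fin.sum_univ_four] at this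
      simpa using this
    · have := aux_G1 ζ h0 P m
      rw [h1] at this
      have := (mul_eq_right₀ hm).1 this.symm
      exact_mod_cast (hζ.zpow_eq_one_iff_dvd _).1 this
    · have := aux_G2 ζ h0 P m
      rw [h2] at this
      have := (mul_eq_right₀ hm).1 this.symm
      exact_mod_cast (hζ.zpow_eq_one_iff_dvd _).1 this)
  have sw := aux_G3 P
  rw [h3] at sw
  have e1 := sw 6 0 0 0
  have e2 := sw 0 6 0 0
  have e3 := sw 3 3 0 0
  have e4 := sw 2 2 1 1
  rw [auxT] at hs
  repeat rw [Finset.sum_insert (by decide)] at hs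
  rw [Finset.sum_singleton, e1, e2, e3, e4] at hs
  generalize coeff (auxE ![6,0,0,0]) P = a at hs
  generalize coeff (auxE ![0,6,0,0]) P = b at hs
  generalize coeff (auxE ![3,3,0,0]) P = p at hs
  generalize coeff (auxE ![2,2,1,1]) P = q at hs
  obtain ⟨A, B, rfl, rfl⟩ : ∃ A B : ℂ, p = A + B ∧ q = 3 * A - B :=
    ⟨(p + q) / 4, (3 * p - q) / 4, by ring, by ring⟩
  refine ⟨a, b, A, B, ?_⟩
  rw [hs]
  simp only [aux_monomial, Qplus, Qminus, map_add, map_sub, map_mul]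
  have c3 : (C 3 : MvPolynomial (Fin 4) ℂ) = 3 := map_ofNat C 3
  simp [c3]
  ring

lemma aux_backward (ζ : ℂ) (hζ : IsPrimitiveRoot ζ 6) (α β A B : ℂ)
    (P : MvPolynomial (Fin 4) ℂ)
    (h : P = C α * (X 0 ^ 6 + X 2 ^ 6) + C β * (X 1 ^ 6 + X 3 ^ 6) +
            C A * Qplus ^ 3 + C B * Qplus * Qminus ^ 2) :
    P.IsHomogeneous 6 ∧ sexticG1 ζ P = P ∧ sexticG2 ζ P = P ∧ sexticG3 P = P := by
  have h0 : ζ ≠ 0 := hζ.ne_zero (by norm_num)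
  have hz : (C ζ : MvPolynomial (Fin 4) ℂ) ^ 6 = 1 := by
    rw [← map_pow, hζ.pow_eq_one, map_one]
  have hw : (C ζ : MvPolynomial (Fin 4) ℂ) * C ζ⁻¹ = 1 := by
    rw [← map_mul, mul_inv_cancel₀ h0, map_one]
  have hz' : (C ζ⁻¹ : MvPolynomial (Fin 4) ℂ) ^ 6 = 1 := by
    rw [← map_pow, inv_pow, hζ.pow_eq_one, inv_one, map_one]
  generalize hZ : (C ζ : MvPolynomial (Fin 4) ℂ) = Z at *
  generalize hW : (C ζ⁻¹ : MvPolynomial (Fin 4) ℂ) = W at *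
  have hxy : ∀ x y : MvPolynomial (Fin 4) ℂ, Z * x * (W * y) = x * y := by
    intro x y; linear_combination (x * y) * hw
  subst h
  refine ⟨?_, ?_, ?_, ?_⟩
  · have hp : Qplus.IsHomogeneous 2 :=
      ((isHomogeneous_X ℂ _).mul (isHomogeneous_X ℂ _)).add
        ((isHomogeneous_X ℂ _).mul (isHomogeneous_X ℂ _))
    have hm : Qminus.IsHomogeneous 2 :=
      ((isHomogeneous_X ℂ _).mul (isHomogeneous_X ℂ _)).sub
        ((isHomogeneous_X ℂ _).mul (isHomogeneous_X ℂ _))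
    have hX : ∀ i : Fin 4, (X i ^ 6 : MvPolynomial (Fin 4) ℂ).IsHomogeneous 6 :=
      fun i => (isHomogeneous_X ℂ i).pow 6
    have k : ∀ (a : ℂ) (q : MvPolynomial (Fin 4) ℂ), q.IsHomogeneous 6 →
        (C a * q).IsHomogeneous 6 := fun a q hq => hq.C_mul a
    rw [mul_assoc (C B)]
    exact (((k _ _ ((hX 0).add (hX 2))).add (k _ _ ((hX 1).add (hX 3)))).add
      (k _ _ (hp.pow 3))).add (k _ _ (hp.mul (hm.pow 2)))
  · simp [sexticG1, Qplus, Qminus, hZ, hW, hxy, mul_pow, hz, hz', algHom_C]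
  · simp [sexticG2, Qplus, Qminus, hZ, hW, hxy, mul_pow, hz, hz', algHom_C]
  · simp [sexticG3, Qplus, Qminus, algHom_C]
    ring

/-- For `ζ` a primitive 6th root of unity, the homogeneous degree-6 polynomials
fixed by `g₁, g₂, g₃` are exactly those of the form
`α(x₁⁶+x₂⁶) + β(y₁⁶+y₂⁶) + A·Q₊³ + B·Q₊Q₋²`; equivalently the span of the four listed
polynomials, which has dimension 4. -/
theorem invariant_sextics (ζ : ℂ) (hζ : IsPrimitiveRoot ζ 6) :
    ({P : MvPolynomial (Fin 4) ℂ |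
        P ∈ homogeneousSubmodule (Fin 4) ℂ 6 ∧
        sexticG1 ζ P = P ∧ sexticG2 ζ P = P ∧ sexticG3 P = P} =
      {P : MvPolynomial (Fin 4) ℂ | ∃ α β A B : ℂ,
        P = C α * (X 0 ^ 6 + X 2 ^ 6) + C β * (X 1 ^ 6 + X 3 ^ 6) +
            C A * Qplus ^ 3 + C B * Qplus * Qminus ^ 2}) ∧
    ({P : MvPolynomial (Fin 4) ℂ |
        P ∈ homogeneousSubmodule (Fin 4) ℂ 6 ∧
        sexticG1 ζ P = P ∧ sexticG2 ζ P = P ∧ sexticG3 P = P} =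
      ↑(Submodule.span ℂ ({X 0 ^ 6 + X 2 ^ 6, X 1 ^ 6 + X 3 ^ 6,
          Qplus ^ 3, Qplus * Qminus ^ 2} : Set (MvPolynomial (Fin 4) ℂ)))) ∧
    Module.finrank ℂ
      (Submodule.span ℂ ({X 0 ^ 6 + X 2 ^ 6, X 1 ^ 6 + X 3 ^ 6,
          Qplus ^ 3, Qplus * Qminus ^ 2} : Set (MvPolynomial (Fin 4) ℂ))) = 4 := by
  have main : ({P : MvPolynomial (Fin 4) ℂ |
        P ∈ homogeneousSubmodule (Fin 4) ℂ 6 ∧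
        sexticG1 ζ P = P ∧ sexticG2 ζ P = P ∧ sexticG3 P = P} =
      {P : MvPolynomial (Fin 4) ℂ | ∃ α β A B : ℂ,
        P = C α * (X 0 ^ 6 + X 2 ^ 6) + C β * (X 1 ^ 6 + X 3 ^ 6) +
            C A * Qplus ^ 3 + C B * Qplus * Qminus ^ 2}) := by
    ext P
    constructor
    · rintro ⟨h, h1, h2, h3⟩
      exact aux_forward ζ hζ P h h1 h2 h3
    · rintro ⟨α, β, A, B, h⟩
      exact aux_backward ζ hζ α β A B P h
  refine ⟨main, ?_, ?_⟩
  · rw [main]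
    ext P
    simp only [Set.mem_ofPred_eq, SetLike.mem_coe, Submodule.mem_span_insert,
      Submodule.mem_span_singleton]
    constructor
    · rintro ⟨α, β, A, B, rfl⟩
      refine ⟨α, _, ⟨β, _, ⟨A, _, ⟨B, rfl⟩, rfl⟩, rfl⟩, ?_⟩
      simp only [smul_eq_C_mul]
      ring
    · rintro ⟨α, _, ⟨β, _, ⟨A, _, ⟨B, rfl⟩, rfl⟩, rfl⟩, rfl⟩
      refine ⟨α, β, A, B, ?_⟩
      simp only [smul_eq_C_mul]
      ring
  · have hli : LinearIndependent ℂ (![X 0 ^ 6 + X 2 ^ 6, X 1 ^ 6 + X 3 ^ 6,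
          Qplus ^ 3, Qplus * Qminus ^ 2] : Fin 4 → MvPolynomial (Fin 4) ℂ) := by
      rw [Fintype.linearIndependent_iff]
      intro g hg
      have ev : ∀ v : Fin 4 → ℂ, _ := fun v => congrArg (eval v) hg
      have a0 := ev ![1, 0, 0, 0]
      have a1 := ev ![0, 1, 0, 0]
      have a2 := ev ![1, 1, 0, 0]
      have a3 := ev ![1, 1, 1, 1]
      simp [Fin.sum_univ_four, Qplus, Qminus, smul_eval] at a0 a1 a2 a3
      simp only [a0, a1] at a2 a3
      norm_num at a2 a3
      rw [a3] at a2
      intro i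
      fin_cases i
      · exact a0
      · exact a1
      · exact a3
      · simpa using a2
    have := finrank_span_eq_card hli
    rw [Fintype.card_fin] at this
    refine Eq.trans ?_ this
    have hr : ∀ p q r t : MvPolynomial (Fin 4) ℂ,
        ({p, q, r, t} : Set (MvPolynomial (Fin 4) ℂ)) = Set.range ![p, q, r, t] := by
      intro p q r t
      ext P
      simp [eq_comm (a := P)]
      tauto
    rw [hr]
end

section
/- Let η ∈ ℂ be a primitive 12th root of unity. For each pair of integers (a,b) with a ≡ b (mod 2), let g_{a,b} be the ℂ-algebra automorphism of ℂ[x₁,y₁,x₂,y₂] determined by x₁ ↦ η^a x₁, y₁ ↦ η^{−a} y₁, x₂ ↦ η^b x₂, y₂ ↦ η^{−b} y₂. Then the subspace of polynomials that are bihomogeneous of bidegree (6,6) (homogeneous of degree 6 in (x₁,y₁) and of degree 6 in (x₂,y₂)) and fixed by g_{a,b} for all such (a,b) is exactly the ℂ-span of the five monomials y₁⁶y₂⁶, x₁⁶y₂⁶, y₁⁶x₂⁶, x₁⁶x₂⁶, x₁³y₁³x₂³y₂³; in particular it has dimension 5. -/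
open MvPolynomial

/-- `g_{a,b} : x₁ ↦ η^a x₁, y₁ ↦ η^{−a} y₁, x₂ ↦ η^b x₂, y₂ ↦ η^{−b} y₂`
(with `x₁ = X 0, y₁ = X 1, x₂ = X 2, y₂ = X 3`). -/
noncomputable def Hgen (η : ℂ) (a b : ℤ) :
    MvPolynomial (Fin 4) ℂ →ₐ[ℂ] MvPolynomial (Fin 4) ℂ :=
  aeval ![C (η ^ a) * X 0, C (η ^ (-a)) * X 1, C (η ^ b) * X 2, C (η ^ (-b)) * X 3]

/-- Bidegree weights: `x₁, y₁` have weight `(1,0)` and `x₂, y₂` have weight `(0,1)`. -/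
def bidegWeight : Fin 4 → ℕ × ℕ := ![(1, 0), (1, 0), (0, 1), (0, 1)]

noncomputable def fiveExp : Fin 5 → (Fin 4 →₀ ℕ) := fun k =>
  Finsupp.equivFunOnFinite.symm
    (![![0, 6, 0, 6], ![6, 0, 0, 6], ![0, 6, 6, 0], ![6, 0, 6, 0], ![3, 3, 3, 3]] k)

theorem fiveExp_injective : Function.Injective fiveExp := by
  intro k l h
  have h' := Finsupp.equivFunOnFinite.symm.injective h
  clear h; revert h'
  revert k l
  decide

theorem monomial_fin_four (d : Fin 4 →₀ ℕ) (c : ℂ) :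
    monomial d c = C c * (X 0 ^ d 0 * X 1 ^ d 1 * X 2 ^ d 2 * X 3 ^ d 3) := by
  rw [monomial_eq, Finsupp.prod_fintype _ _ (by simp), Fin.prod_univ_four]

theorem five_set_eq :
    ({X 1 ^ 6 * X 3 ^ 6, X 0 ^ 6 * X 3 ^ 6, X 1 ^ 6 * X 2 ^ 6, X 0 ^ 6 * X 2 ^ 6,
          X 0 ^ 3 * X 1 ^ 3 * X 2 ^ 3 * X 3 ^ 3} : Set (MvPolynomial (Fin 4) ℂ)) =
    Set.range (fun k => monomial (fiveExp k) (1 : ℂ)) := by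
  ext p
  simp only [Set.mem_range, Fin.exists_fin_succ, monomial_fin_four]
  simp [fiveExp, eq_comm]

theorem Hgen_monomial {η : ℂ} (h0 : η ≠ 0) (a b : ℤ) (d : Fin 4 →₀ ℕ) (c : ℂ) :
    Hgen η a b (monomial d c) =
      monomial d (η ^ (a * ((d 0 : ℤ) - d 1) + b * ((d 2 : ℤ) - d 3)) * c) := by
  have h : η ^ (a * ((d 0 : ℤ) - d 1) + b * ((d 2 : ℤ) - d 3)) =
      (η ^ a) ^ d 0 * (η ^ (-a)) ^ d 1 * (η ^ b) ^ d 2 * (η ^ (-b)) ^ d 3 := by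
    simp only [← zpow_natCast, ← zpow_mul, ← zpow_add₀ h0]
    congr 1
    ring
  rw [h, monomial_fin_four, monomial_fin_four, Hgen]
  simp only [map_mul, map_pow, aeval_X, algHom_C, algebraMap_eq]
  simp [mul_pow]
  ring

theorem coeff_Hgen {η : ℂ} (h0 : η ≠ 0) (a b : ℤ) (d : Fin 4 →₀ ℕ)
    (P : MvPolynomial (Fin 4) ℂ) :
    coeff d (Hgen η a b P) =
      η ^ (a * ((d 0 : ℤ) - d 1) + b * ((d 2 : ℤ) - d 3)) * coeff d P := by
  induction P using MvPolynomial.induction_on' with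
  | monomial u c =>
    rw [Hgen_monomial h0, coeff_monomial, coeff_monomial]
    split_ifs with h
    · rw [h]
    · simp
  | add p q hp hq => rw [map_add, coeff_add, coeff_add, hp, hq, mul_add]

theorem five_arith (p q r s : ℕ) (h1 : p + q = 6) (h2 : r + s = 6)
    (k1 : (12 : ℤ) ∣ 2 * ((p : ℤ) - q) + 0 * ((r : ℤ) - s))
    (k2 : (12 : ℤ) ∣ 0 * ((p : ℤ) - q) + 2 * ((r : ℤ) - s))
    (k3 : (12 : ℤ) ∣ 1 * ((p : ℤ) - q) + 1 * ((r : ℤ) - s)) :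
    (p = 0 ∧ q = 6 ∧ r = 0 ∧ s = 6) ∨ (p = 6 ∧ q = 0 ∧ r = 0 ∧ s = 6) ∨
    (p = 0 ∧ q = 6 ∧ r = 6 ∧ s = 0) ∨ (p = 6 ∧ q = 0 ∧ r = 6 ∧ s = 0) ∨
    (p = 3 ∧ q = 3 ∧ r = 3 ∧ s = 3) := by
  have hp : p = 0 ∨ p = 3 ∨ p = 6 := by clear k2 k3 h2; omega
  have hr : r = 0 ∨ r = 3 ∨ r = 6 := by clear k1 k3 h1 hp; omega
  have hq : q = 6 - p := by omega
  have hs : s = 6 - r := by omega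
  subst hq hs
  clear k1 k2
  rcases hp with rfl | rfl | rfl <;> rcases hr with rfl | rfl | rfl <;> revert k3 <;> decide

theorem weight_bideg (d : Fin 4 →₀ ℕ) :
    Finsupp.weight bidegWeight d = (d 0 + d 1, d 2 + d 3) := by
  rw [Finsupp.weight_apply, Finsupp.sum_fintype _ _ (by simp), Fin.sum_univ_four]
  simp [bidegWeight]

/-- For `η` a primitive 12th root of unity, the bidegree-(6,6) polynomials
fixed by all `g_{a,b}` with `a ≡ b (mod 2)` are exactly the span of the five monomials
`y₁⁶y₂⁶, x₁⁶y₂⁶, y₁⁶x₂⁶, x₁⁶x₂⁶, x₁³y₁³x₂³y₂³`; in particular this space has dimension 5. -/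
theorem invariant_bidegree_six_six (η : ℂ) (hη : IsPrimitiveRoot η 12) :
    ({P : MvPolynomial (Fin 4) ℂ |
        IsWeightedHomogeneous bidegWeight P (6, 6) ∧
        ∀ a b : ℤ, a % 2 = b % 2 → Hgen η a b P = P} =
      ↑(Submodule.span ℂ
        ({X 1 ^ 6 * X 3 ^ 6, X 0 ^ 6 * X 3 ^ 6, X 1 ^ 6 * X 2 ^ 6, X 0 ^ 6 * X 2 ^ 6,
          X 0 ^ 3 * X 1 ^ 3 * X 2 ^ 3 * X 3 ^ 3} : Set (MvPolynomial (Fin 4) ℂ)))) ∧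
    Module.finrank ℂ
      (Submodule.span ℂ
        ({X 1 ^ 6 * X 3 ^ 6, X 0 ^ 6 * X 3 ^ 6, X 1 ^ 6 * X 2 ^ 6, X 0 ^ 6 * X 2 ^ 6,
          X 0 ^ 3 * X 1 ^ 3 * X 2 ^ 3 * X 3 ^ 3} : Set (MvPolynomial (Fin 4) ℂ))) = 5 := by
  have h0 : η ≠ 0 := hη.ne_zero (by norm_num)
  rw [five_set_eq]
  constructor
  · ext P
    simp only [Set.mem_ofPred_eq, SetLike.mem_coe]
    constructor
    · rintro ⟨hw, hf⟩
      rw [P.as_sum]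
      refine Submodule.sum_mem _ fun d hd => ?_
      have hc : coeff d P ≠ 0 := mem_support_iff.mp hd
      have hdeg := hw hc
      rw [weight_bideg, Prod.mk.injEq] at hdeg
      have key : ∀ a b : ℤ, a % 2 = b % 2 →
          (12 : ℤ) ∣ a * ((d 0 : ℤ) - d 1) + b * ((d 2 : ℤ) - d 3) := by
        intro a b hab
        have h1 := coeff_Hgen h0 a b d P
        rw [hf a b hab] at h1
        have h2 : η ^ (a * ((d 0 : ℤ) - d 1) + b * ((d 2 : ℤ) - d 3)) = 1 :=
          mul_right_cancel₀ hc (by rw [← h1, one_mul])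
        exact_mod_cast (hη.zpow_eq_one_iff_dvd _).mp h2
      have k1 := key 2 0 (by norm_num)
      have k2 := key 0 2 (by norm_num)
      have k3 := key 1 1 rfl
      have hex : ∃ k, fiveExp k = d := by
        have : (d 0 = 0 ∧ d 1 = 6 ∧ d 2 = 0 ∧ d 3 = 6) ∨ (d 0 = 6 ∧ d 1 = 0 ∧ d 2 = 0 ∧ d 3 = 6) ∨
            (d 0 = 0 ∧ d 1 = 6 ∧ d 2 = 6 ∧ d 3 = 0) ∨ (d 0 = 6 ∧ d 1 = 0 ∧ d 2 = 6 ∧ d 3 = 0) ∨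
            (d 0 = 3 ∧ d 1 = 3 ∧ d 2 = 3 ∧ d 3 = 3) :=
          five_arith _ _ _ _ hdeg.1 hdeg.2 k1 k2 k3
        rcases this with h | h | h | h | h
        · exact ⟨0, by ext i; fin_cases i <;> simp [fiveExp, h]⟩
        · exact ⟨1, by ext i; fin_cases i <;> simp [fiveExp, h]⟩
        · exact ⟨2, by ext i; fin_cases i <;> simp [fiveExp, h]⟩
        · exact ⟨3, by ext i; fin_cases i <;> simp [fiveExp, h]⟩
        · exact ⟨4, by ext i; fin_cases i <;> simp [fiveExp, h]⟩
      obtain ⟨k, hk⟩ := hex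
      have : monomial d (coeff d P) = coeff d P • monomial (fiveExp k) (1 : ℂ) := by
        rw [smul_monomial, hk, smul_eq_mul, mul_one]
      rw [this]
      exact Submodule.smul_mem _ _ (Submodule.subset_span ⟨k, rfl⟩)
    · intro hP
      induction hP using Submodule.span_induction with
      | mem x hx =>
        obtain ⟨k, rfl⟩ := hx
        refine ⟨isWeightedHomogeneous_monomial _ _ _ ?_, fun a b hab => ?_⟩
        · rw [weight_bideg]
          fin_cases k <;> simp [fiveExp]
        · change Hgen η a b (monomial (fiveExp k) 1) = monomial (fiveExp k) 1
          rw [Hgen_monomial h0, mul_one]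
          congr 1
          apply (hη.zpow_eq_one_iff_dvd _).mpr
          fin_cases k <;> simp [fiveExp] <;> omega
      | zero => exact ⟨isWeightedHomogeneous_zero _ _ _, fun a b _ => map_zero _⟩
      | add x y _ _ hx hy =>
        exact ⟨hx.1.add hy.1, fun a b hab => by rw [map_add, hx.2 a b hab, hy.2 a b hab]⟩
      | smul c x _ hx =>
        exact ⟨(weightedHomogeneousSubmodule ℂ bidegWeight (6, 6)).smul_mem c hx.1,
          fun a b hab => by rw [map_smul, hx.2 a b hab]⟩
  · have hli : LinearIndependent ℂ (fun k => monomial (fiveExp k) (1 : ℂ)) := by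
      have := (basisMonomials (Fin 4) ℂ).linearIndependent.comp fiveExp fiveExp_injective
      simpa [Function.comp_def] using this
    rw [finrank_span_eq_card hli, Fintype.card_fin]
end

section
/- Let ζ ∈ ℂ be a primitive 6th root of unity and let g₁, g₂, g₃ be the linear automorphisms of ℂ⁴ (with standard basis e₁, e₂, e₃, e₄) given by g₁ = diag(ζ, ζ⁻¹, 1, 1), g₂ = diag(1, 1, ζ, ζ⁻¹), and g₃ : (v₁,v₂,v₃,v₄) ↦ (v₃,v₄,v₁,v₂). Then the space of alternating ℂ-bilinear forms B on ℂ⁴ satisfying B(g·u, g·v) = B(u,v) for g ∈ {g₁, g₂, g₃} is exactly the set of scalar multiples of the form ω defined by ω(u,v) = u₁v₂ − u₂v₁ + u₃v₄ − u₄v₃; in particular it is 1-dimensional. (This is the statement that the G-invariant part of Λ²U*, the dual of the obstruction space H⁰(T*S ⊗ K_S) for the G-invariant sextic surfaces, is 1-dimensional, spanned by ω = dx₁dy₁ + dx₂dy₂.) -/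
/-- The standard symplectic form `ω(u,v) = u₁v₂ − u₂v₁ + u₃v₄ − u₄v₃` on `ℂ⁴`. -/
noncomputable def omegaForm : (Fin 4 → ℂ) →ₗ[ℂ] (Fin 4 → ℂ) →ₗ[ℂ] ℂ :=
  LinearMap.mk₂ ℂ (fun u v => u 0 * v 1 - u 1 * v 0 + u 2 * v 3 - u 3 * v 2)
    (by intros; simp only [Pi.add_apply]; ring)
    (by intros; simp only [Pi.smul_apply, smul_eq_mul]; ring)
    (by intros; simp only [Pi.add_apply]; ring)
    (by intros; simp only [Pi.smul_apply, smul_eq_mul]; ring)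

/-- `g₁ = diag(ζ, ζ⁻¹, 1, 1)` on `ℂ⁴`. -/
noncomputable def symG1 (ζ : ℂ) (v : Fin 4 → ℂ) : Fin 4 → ℂ := ![ζ * v 0, ζ⁻¹ * v 1, v 2, v 3]

/-- `g₂ = diag(1, 1, ζ, ζ⁻¹)` on `ℂ⁴`. -/
noncomputable def symG2 (ζ : ℂ) (v : Fin 4 → ℂ) : Fin 4 → ℂ := ![v 0, v 1, ζ * v 2, ζ⁻¹ * v 3]

/-- `g₃ : (v₁,v₂,v₃,v₄) ↦ (v₃,v₄,v₁,v₂)` on `ℂ⁴`. -/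
def symG3 (v : Fin 4 → ℂ) : Fin 4 → ℂ := ![v 2, v 3, v 0, v 1]

/-- For `ζ` a primitive 6th root of unity, the alternating bilinear forms on
`ℂ⁴` invariant under `g₁, g₂, g₃` are exactly the scalar multiples of
`ω(u,v) = u₁v₂ − u₂v₁ + u₃v₄ − u₄v₃`; in particular (`ω ≠ 0`) this space is
1-dimensional. -/
theorem invariant_alternating_forms (ζ : ℂ) (hζ : IsPrimitiveRoot ζ 6) :
    ({B : (Fin 4 → ℂ) →ₗ[ℂ] (Fin 4 → ℂ) →ₗ[ℂ] ℂ |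
        (∀ v, B v v = 0) ∧
        (∀ u v, B (symG1 ζ u) (symG1 ζ v) = B u v) ∧
        (∀ u v, B (symG2 ζ u) (symG2 ζ v) = B u v) ∧
        (∀ u v, B (symG3 u) (symG3 v) = B u v)} =
      {B : (Fin 4 → ℂ) →ₗ[ℂ] (Fin 4 → ℂ) →ₗ[ℂ] ℂ | ∃ c : ℂ, B = c • omegaForm}) ∧
    omegaForm ≠ 0 := by
  have hζ0 : ζ ≠ 0 := hζ.ne_zero (by norm_num)
  have hζ1 : ζ ≠ 1 := hζ.ne_one (by norm_num)
  have hi1 : ζ⁻¹ ≠ 1 := by simpa using hζ1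
  have happ : ∀ u v, omegaForm u v = u 0 * v 1 - u 1 * v 0 + u 2 * v 3 - u 3 * v 2 :=
    fun u v => rfl
  refine ⟨?_, ?_⟩
  · ext B
    simp only [Set.mem_ofPred_eq]
    constructor
    · rintro ⟨ha, h1, -, h3⟩
      have hanti : ∀ u v, B v u = - B u v := by
        intro u v
        have h := ha (u + v)
        simp only [map_add, LinearMap.add_apply, ha] at h
        linear_combination h
      let e : Fin 4 → (Fin 4 → ℂ) := fun i => Pi.single i 1
      have hexp : ∀ u : Fin 4 → ℂ, u = u 0 • e 0 + u 1 • e 1 + u 2 • e 2 + u 3 • e 3 := by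
        intro u
        ext i
        fin_cases i <;> simp [e]
      have g10 : symG1 ζ (e 0) = ζ • e 0 := by
        ext i; fin_cases i <;> simp [e, symG1]
      have g11 : symG1 ζ (e 1) = ζ⁻¹ • e 1 := by
        ext i; fin_cases i <;> simp [e, symG1]
      have g12 : symG1 ζ (e 2) = e 2 := by
        ext i; fin_cases i <;> simp [e, symG1]
      have g13 : symG1 ζ (e 3) = e 3 := by
        ext i; fin_cases i <;> simp [e, symG1]
      have g30 : symG3 (e 0) = e 2 := by
        ext i; fin_cases i <;> simp [e, symG3]
      have g31 : symG3 (e 1) = e 3 := by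
        ext i; fin_cases i <;> simp [e, symG3]
      have hz : ∀ c x : ℂ, c ≠ 1 → c * x = x → x = 0 := by
        intro c x hc h
        have : (c - 1) * x = 0 := by linear_combination h
        exact (mul_eq_zero.mp this).resolve_left (sub_ne_zero.mpr hc)
      have b02 : B (e 0) (e 2) = 0 := hz ζ _ hζ1 (by simpa [g10, g12] using h1 (e 0) (e 2))
      have b03 : B (e 0) (e 3) = 0 := hz ζ _ hζ1 (by simpa [g10, g13] using h1 (e 0) (e 3))
      have b12 : B (e 1) (e 2) = 0 :=
        hz ζ⁻¹ _ hi1 (by simpa only [g11, g12, map_smul, LinearMap.smul_apply, smul_eq_mul] using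
                          h1 (e 1) (e 2))
      have b13 : B (e 1) (e 3) = 0 :=
        hz ζ⁻¹ _ hi1 (by simpa only [g11, g13, map_smul, LinearMap.smul_apply, smul_eq_mul] using
                          h1 (e 1) (e 3))
      have b23 : B (e 2) (e 3) = B (e 0) (e 1) := by simpa only [g30, g31] using h3 (e 0) (e 1)
      refine ⟨B (e 0) (e 1), ?_⟩
      refine LinearMap.ext fun u => LinearMap.ext fun v => ?_
      rw [LinearMap.smul_apply, LinearMap.smul_apply, happ]
      conv_lhs => rw [hexp u, hexp v]
      simp only [map_add, map_smul, LinearMap.add_apply, LinearMap.smul_apply, smul_eq_mul, ha,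
        hanti (e 0) (e 1), hanti (e 0) (e 2), hanti (e 0) (e 3), hanti (e 1) (e 2),
        hanti (e 1) (e 3), hanti (e 2) (e 3), b02, b03, b12, b13, b23]
      ring
    · rintro ⟨c, rfl⟩
      refine ⟨?_, ?_, ?_, ?_⟩ <;> intros <;>
        simp only [LinearMap.smul_apply, happ, smul_eq_mul, symG1, symG2, symG3,
          Matrix.cons_val] <;> field_simp <;> ring
  · intro h
    have h2 := happ (Pi.single 0 1) (Pi.single 1 1)
    rw [h] at h2
    simp at h2
end
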